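/- arXiv:2112.02284 — 3 statements merged into one kernel-verified Lean document; each statement's English description precedes it below -/
import Mathlib

section
/- Let X₁, X₂ be real random variables such that h(X₁) and h(X₂) are finite. If X₁ − X₂ is not almost surely constant (i.e., ℙ(X₁ − X₂ = c) < 1 for every c ∈ ℝ), then for every α ∈ (0,1), h(αX₁ + (1−α)X₂) < α·h(X₁) + (1−α)·h(X₂). -/
/-!
Normalize: with `A = E[e^f]` and `B = E[e^g]`, put `u = f - log A`, `v = g - log B`, so that
`E[e^u] = E[e^v] = 1`. Convexity of `exp` gives `e^{αu + (1-α)v} ≤ α e^u + (1-α) e^v` pointwise, with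
equality only where `u = v`. Taking expectations shows that `f ↦ log E[e^f]` is convex, and that
equality forces `u = v` a.s., i.e. `f - g` a.s. constant (`log_integral_exp_convex`,
`ae_eq_const_of_log_integral_exp_eq`). For `f = -aX₁`, `g = -aX₂` this is strict convexity of each
entropic risk measure `h_a`.

To integrate the strict inequality in `a`, one needs `a ↦ h_a(αX₁ + (1-α)X₂)` to be `m`-integrable.
This holds because `a ↦ h_a(X)` is nondecreasing (`entropic_monotoneOn`, the case `g = 0` of the
convexity inequality), and a monotone function on a compact interval is integrable with respect to
any finite measure.
-/

open MeasureTheory Filter Set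
open scoped ENNReal

noncomputable section

variable {Ω : Type*} [MeasurableSpace Ω]

/-- Entropic risk measure `h_a(X) = (1/a) log E[e^{-aX}]`. -/
def entropic (P : Measure Ω) (a : ℝ) (X : Ω → ℝ) : ℝ :=
  (1 / a) * Real.log (∫ ω, Real.exp (-a * X ω) ∂P)

/-- Weighted entropic risk measure `h(X) = ∫_{[a₀,a₁]} h_a(X) m(da)`. -/
def werm (P : Measure Ω) (m : Measure ℝ) (a₀ a₁ : ℝ) (X : Ω → ℝ) : ℝ :=
  ∫ a in Set.Icc a₀ a₁, entropic P a X ∂m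

/-- Marginal risk density transform `h′(X) = -∫_{[a₀,a₁]} e^{-aX}/E[e^{-aX}] m(da)`. -/
def hprime (P : Measure Ω) (m : Measure ℝ) (a₀ a₁ : ℝ) (X : Ω → ℝ) (ω : Ω) : ℝ :=
  -∫ a in Set.Icc a₀ a₁, Real.exp (-a * X ω) / (∫ ω', Real.exp (-a * X ω') ∂P) ∂m

/-- Extended-real-valued expectation `E[f] = ∫ f⁺ - ∫ f⁻ ∈ [-∞,∞]`. -/
def eint (P : Measure Ω) (f : Ω → ℝ) : EReal :=
  ((∫⁻ ω, ENNReal.ofReal (f ω) ∂P : ℝ≥0∞) : EReal)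
    - ((∫⁻ ω, ENNReal.ofReal (-(f ω)) ∂P : ℝ≥0∞) : EReal)

/-- `E[ρX] ∈ [0,∞]` for a nonnegative payoff. -/
def budget (P : Measure Ω) (ρ X : Ω → ℝ) : ℝ≥0∞ := ∫⁻ ω, ENNReal.ofReal (ρ ω * X ω) ∂P

/-- `X ∈ L⁰₊`: a nonnegative random variable. -/
def Lpos (P : Measure Ω) (X : Ω → ℝ) : Prop := Measurable X ∧ ∀ᵐ ω ∂P, 0 ≤ X ω

/-- Objective of the Lagrangian risk-minimization problem: `h(X) + λ E[ρX]`. -/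
def robj (P : Measure Ω) (m : Measure ℝ) (a₀ a₁ : ℝ) (ρ : Ω → ℝ) (lam : ℝ) (X : Ω → ℝ) : EReal :=
  ((werm P m a₀ a₁ X : ℝ) : EReal) + (lam : EReal) * ((budget P ρ X : ℝ≥0∞) : EReal)

/-- `ψ_X(y) = ∫_{[a₀,a₁]} e^{-ay} / E[e^{-aX}] m(da)`. -/
def psi (P : Measure Ω) (m : Measure ℝ) (a₀ a₁ : ℝ) (X : Ω → ℝ) (y : ℝ) : ℝ :=
  ∫ a in Set.Icc a₀ a₁, Real.exp (-a * y) / (∫ ω, Real.exp (-a * X ω) ∂P) ∂m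

/-- Inverse of `ψ_X` on `(0,∞)` (realized via `sSup`, since `ψ_X` is continuous, strictly
decreasing with limits `∞` at `-∞` and `0` at `∞`). -/
def psiInv (P : Measure Ω) (m : Measure ℝ) (a₀ a₁ : ℝ) (X : Ω → ℝ) (z : ℝ) : ℝ :=
  sSup {y : ℝ | z ≤ psi P m a₀ a₁ X y}

/-- The transform `𝐓X = max(ψ_X⁻¹(λρ), 0)`. -/
def Ttrans (P : Measure Ω) (m : Measure ℝ) (a₀ a₁ lam : ℝ) (ρ : Ω → ℝ) (X : Ω → ℝ) : Ω → ℝ :=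
  fun ω => max (psiInv P m a₀ a₁ X (lam * ρ ω)) 0

/-- `X ∈ 𝒳(x)`: nonnegative and `E[ρX] ≤ x`. -/
def feasible (P : Measure Ω) (ρ : Ω → ℝ) (x : ℝ) (X : Ω → ℝ) : Prop :=
  Lpos P X ∧ budget P ρ X ≤ ENNReal.ofReal x

/-- `γ₁(x)`: the minimal value of `h` over `𝒳(x)`. -/
def gamma1 (P : Measure Ω) (m : Measure ℝ) (a₀ a₁ : ℝ) (ρ : Ω → ℝ) (x : ℝ) : ℝ :=
  sInf (werm P m a₀ a₁ '' {X | feasible P ρ x X})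

/-- Expected utility `E[U(X)] ∈ [-∞,∞]`. -/
def eutil (P : Measure Ω) (U : ℝ → ℝ) (X : Ω → ℝ) : EReal := eint P (fun ω => U (X ω))

/-- Full Lagrangian objective `E[U(X)] - μ h(X) - λ E[ρX]`. -/
def fullObj (P : Measure Ω) (m : Measure ℝ) (a₀ a₁ : ℝ) (ρ : Ω → ℝ) (U : ℝ → ℝ)
    (μ lam : ℝ) (X : Ω → ℝ) : EReal :=
  eutil P U X - ((μ * werm P m a₀ a₁ X : ℝ) : EReal)
    - (lam : EReal) * ((budget P ρ X : ℝ≥0∞) : EReal)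

/-- Weighted AM-GM in exponential form, with its equality case. -/
lemma exp_convex_gap {α : ℝ} (hα : α ∈ Ioo (0 : ℝ) 1) (x y : ℝ) :
    Real.exp (α * x + (1 - α) * y) ≤ α * Real.exp x + (1 - α) * Real.exp y ∧
      (Real.exp (α * x + (1 - α) * y) = α * Real.exp x + (1 - α) * Real.exp y → x = y) := by
  have h1 : 0 < 1 - α := sub_pos.2 hα.2
  refine ⟨?_, fun h => ?_⟩
  · simpa using convexOn_exp.2 (mem_univ x) (mem_univ y) hα.1.le h1.le (by ring)
  · by_contra hne
    have := strictConvexOn_exp.2 (mem_univ x) (mem_univ y) hne hα.1 h1 (by ring)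
    simp only [smul_eq_mul] at this
    exact this.ne h

lemma integrable_exp_convex {P : Measure Ω} {f g : Ω → ℝ} (hf : Measurable f) (hg : Measurable g)
    (hfi : Integrable (fun ω => Real.exp (f ω)) P) (hgi : Integrable (fun ω => Real.exp (g ω)) P)
    {α : ℝ} (hα : α ∈ Ioo (0 : ℝ) 1) :
    Integrable (fun ω => Real.exp (α * f ω + (1 - α) * g ω)) P := by
  refine ((hfi.const_mul α).add (hgi.const_mul (1 - α))).mono' ?_ (ae_of_all _ fun ω => ?_)
  · exact (by fun_prop : Measurable _).aestronglyMeasurable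
  · rw [Real.norm_eq_abs, Real.abs_exp]
    exact (exp_convex_gap hα _ _).1

/-- The expected gap in the exponential AM-GM inequality, for `f` and `g` normalized so that
`E[e^f] = E[e^g] = 1`. -/
lemma integral_exp_gap {P : Measure Ω} [IsProbabilityMeasure P] {f g : Ω → ℝ}
    (hf : Measurable f) (hg : Measurable g)
    (hfi : Integrable (fun ω => Real.exp (f ω)) P) (hgi : Integrable (fun ω => Real.exp (g ω)) P)
    {α : ℝ} (hα : α ∈ Ioo (0 : ℝ) 1) (A B : ℝ)
    (hA : A = Real.log (∫ ω, Real.exp (f ω) ∂P)) (hB : B = Real.log (∫ ω, Real.exp (g ω) ∂P)) :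
    Integrable (fun ω => α * Real.exp (f ω - A) + (1 - α) * Real.exp (g ω - B)
      - Real.exp (α * (f ω - A) + (1 - α) * (g ω - B))) P ∧
    ∫ ω, (α * Real.exp (f ω - A) + (1 - α) * Real.exp (g ω - B)
      - Real.exp (α * (f ω - A) + (1 - α) * (g ω - B))) ∂P
      = 1 - Real.exp (Real.log (∫ ω, Real.exp (α * f ω + (1 - α) * g ω) ∂P)
          - (α * A + (1 - α) * B)) := by
  have hmix := integrable_exp_convex hf hg hfi hgi hα
  have i1 : Integrable (fun ω => α * Real.exp (f ω - A)) P := by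
    simp only [Real.exp_sub]
    exact (hfi.div_const _).const_mul α
  have i2 : Integrable (fun ω => (1 - α) * Real.exp (g ω - B)) P := by
    simp only [Real.exp_sub]
    exact (hgi.div_const _).const_mul _
  have e3 : ∀ ω, Real.exp (α * (f ω - A) + (1 - α) * (g ω - B))
      = Real.exp (α * f ω + (1 - α) * g ω) / Real.exp (α * A + (1 - α) * B) := fun ω => by
    rw [← Real.exp_sub]
    congr 1
    ring
  have i3 : Integrable (fun ω => Real.exp (α * (f ω - A) + (1 - α) * (g ω - B))) P := by
    simp only [e3]
    exact hmix.div_const _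
  refine ⟨(i1.add i2).sub i3, ?_⟩
  rw [integral_sub (by exact i1.add i2) i3, integral_add i1 i2, integral_const_mul, integral_const_mul]
  simp only [e3]
  rw [Real.exp_sub, Real.exp_log (integral_exp_pos hmix), integral_div]
  simp only [Real.exp_sub]
  rw [integral_div, integral_div, hA, hB, Real.exp_log (integral_exp_pos hfi),
    Real.exp_log (integral_exp_pos hgi), div_self (integral_exp_pos hfi).ne',
    div_self (integral_exp_pos hgi).ne']
  ring

lemma log_integral_exp_convex {P : Measure Ω} [IsProbabilityMeasure P] {f g : Ω → ℝ}
    (hf : Measurable f) (hg : Measurable g)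
    (hfi : Integrable (fun ω => Real.exp (f ω)) P) (hgi : Integrable (fun ω => Real.exp (g ω)) P)
    {α : ℝ} (hα : α ∈ Ioo (0 : ℝ) 1) :
    Real.log (∫ ω, Real.exp (α * f ω + (1 - α) * g ω) ∂P)
      ≤ α * Real.log (∫ ω, Real.exp (f ω) ∂P) + (1 - α) * Real.log (∫ ω, Real.exp (g ω) ∂P) := by
  obtain ⟨-, h⟩ := integral_exp_gap hf hg hfi hgi hα _ _ rfl rfl
  have h0 := h ▸ integral_nonneg fun ω => sub_nonneg.2 (exp_convex_gap hα _ _).1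
  exact sub_nonpos.1 (Real.exp_le_one_iff.1 (sub_nonneg.1 h0))

/-- Equality case of `log_integral_exp_convex`. -/
lemma ae_eq_const_of_log_integral_exp_eq {P : Measure Ω} [IsProbabilityMeasure P] {f g : Ω → ℝ}
    (hf : Measurable f) (hg : Measurable g)
    (hfi : Integrable (fun ω => Real.exp (f ω)) P) (hgi : Integrable (fun ω => Real.exp (g ω)) P)
    {α : ℝ} (hα : α ∈ Ioo (0 : ℝ) 1)
    (heq : Real.log (∫ ω, Real.exp (α * f ω + (1 - α) * g ω) ∂P)
      = α * Real.log (∫ ω, Real.exp (f ω) ∂P) + (1 - α) * Real.log (∫ ω, Real.exp (g ω) ∂P)) :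
    ∃ c : ℝ, ∀ᵐ ω ∂P, f ω - g ω = c := by
  obtain ⟨hi, h⟩ := integral_exp_gap hf hg hfi hgi hα _ _ rfl rfl
  rw [heq, sub_self, Real.exp_zero, sub_self, integral_eq_zero_iff_of_nonneg
    (fun ω => sub_nonneg.2 (exp_convex_gap hα _ _).1) hi] at h
  refine ⟨Real.log (∫ ω, Real.exp (f ω) ∂P) - Real.log (∫ ω, Real.exp (g ω) ∂P), ?_⟩
  filter_upwards [h] with ω hω
  have := (exp_convex_gap hα _ _).2 (sub_eq_zero.1 hω).symm
  linarith

/-- The entropic risk measure is nondecreasing in the risk aversion `a`: for `a < b`, convexity of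
`f ↦ log E[e^f]` between `-bX` and `0` with weight `a / b`. -/
lemma entropic_monotoneOn {P : Measure Ω} [IsProbabilityMeasure P] {a₀ a₁ : ℝ} (ha₀ : 0 < a₀)
    {X : Ω → ℝ} (hX : Measurable X)
    (hint : ∀ a ∈ Icc a₀ a₁, Integrable (fun ω => Real.exp (-a * X ω)) P) :
    MonotoneOn (fun a => entropic P a X) (Icc a₀ a₁) := by
  intro a ha b hb hab
  rcases hab.eq_or_lt with rfl | hlt
  · rfl
  have ha0 : 0 < a := ha₀.trans_le ha.1
  have hb0 : 0 < b := ha₀.trans_le hb.1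
  have h := log_integral_exp_convex (g := fun _ => 0) (hX.const_mul (-b)) measurable_const
    (hint b hb) (integrable_const _) (α := a / b) ⟨by positivity, (div_lt_one hb0).2 hlt⟩
  have e : ∀ ω, a / b * (-b * X ω) + (1 - a / b) * 0 = -a * X ω := fun ω => by
    field_simp
    ring
  simp only [e] at h
  simp only [Real.exp_zero, integral_const, probReal_univ, smul_eq_mul, mul_one, Real.log_one,
    mul_zero, add_zero] at h
  simp only [entropic]
  calc 1 / a * Real.log (∫ ω, Real.exp (-a * X ω) ∂P)
      ≤ 1 / a * (a / b * Real.log (∫ ω, Real.exp (-b * X ω) ∂P)) := by gcongr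
    _ = 1 / b * Real.log (∫ ω, Real.exp (-b * X ω) ∂P) := by field_simp

lemma entropic_strict_convex {P : Measure Ω} [IsProbabilityMeasure P] {a : ℝ} (ha : 0 < a)
    {X₁ X₂ : Ω → ℝ} (hX₁ : Measurable X₁) (hX₂ : Measurable X₂)
    (hint₁ : Integrable (fun ω => Real.exp (-a * X₁ ω)) P)
    (hint₂ : Integrable (fun ω => Real.exp (-a * X₂ ω)) P)
    (hnc : ∀ c : ℝ, P {ω | X₁ ω - X₂ ω = c} < 1) {α : ℝ} (hα : α ∈ Ioo (0 : ℝ) 1) :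
    entropic P a (fun ω => α * X₁ ω + (1 - α) * X₂ ω)
      < α * entropic P a X₁ + (1 - α) * entropic P a X₂ := by
  have e : ∀ ω, -a * (α * X₁ ω + (1 - α) * X₂ ω) = α * (-a * X₁ ω) + (1 - α) * (-a * X₂ ω) :=
    fun ω => by ring
  have hm₁ := hX₁.const_mul (-a)
  have hm₂ := hX₂.const_mul (-a)
  have hlt := (log_integral_exp_convex hm₁ hm₂ hint₁ hint₂ hα).lt_of_ne fun heq => by
    obtain ⟨c, hc⟩ := ae_eq_const_of_log_integral_exp_eq hm₁ hm₂ hint₁ hint₂ hα heq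
    refine (hnc (-c / a)).ne
      ((mem_ae_iff_prob_eq_one (hX₁.sub hX₂ (measurableSet_singleton _))).1 ?_)
    filter_upwards [hc] with ω hω
    show X₁ ω - X₂ ω = -c / a
    rw [eq_div_iff ha.ne']
    linarith
  simp only [entropic, e]
  calc _ < 1 / a * _ := mul_lt_mul_of_pos_left hlt (one_div_pos.2 ha)
    _ = _ := by ring

/-- strict convexity of the weighted entropic risk measure `h` for random
variables whose difference is not a.s. constant, assuming `h(X₁)` and `h(X₂)` are finite
(i.e. all the defining integrals exist). -/
theorem werm_strict_convex (P : Measure Ω) [IsProbabilityMeasure P]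
    (a₀ a₁ : ℝ) (ha₀ : 0 < a₀) (ha₀₁ : a₀ < a₁)
    (m : Measure ℝ) [IsProbabilityMeasure m] (hm : m (Set.Icc a₀ a₁) = 1)
    (X₁ X₂ : Ω → ℝ) (hmX₁ : Measurable X₁) (hmX₂ : Measurable X₂)
    (hint₁ : ∀ a ∈ Set.Icc a₀ a₁, Integrable (fun ω => Real.exp (-a * X₁ ω)) P)
    (hint₂ : ∀ a ∈ Set.Icc a₀ a₁, Integrable (fun ω => Real.exp (-a * X₂ ω)) P)
    (hintm₁ : IntegrableOn (fun a => entropic P a X₁) (Set.Icc a₀ a₁) m)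
    (hintm₂ : IntegrableOn (fun a => entropic P a X₂) (Set.Icc a₀ a₁) m)
    (hnc : ∀ c : ℝ, P {ω | X₁ ω - X₂ ω = c} < 1) :
    ∀ α ∈ Set.Ioo (0 : ℝ) 1,
      werm P m a₀ a₁ (fun ω => α * X₁ ω + (1 - α) * X₂ ω)
        < α * werm P m a₀ a₁ X₁ + (1 - α) * werm P m a₀ a₁ X₂ := by
  intro α hα
  have hmono := entropic_monotoneOn (P := P) (a₁ := a₁) ha₀
    (X := fun ω => α * X₁ ω + (1 - α) * X₂ ω) (by fun_prop) (fun a ha => by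
      convert integrable_exp_convex (hmX₁.const_mul (-a)) (hmX₂.const_mul (-a))
        (hint₁ a ha) (hint₂ a ha) hα using 3
      ring)
  have hi : IntegrableOn (fun a => entropic P a fun ω => α * X₁ ω + (1 - α) * X₂ ω)
      (Icc a₀ a₁) m := hmono.integrableOn_isCompact isCompact_Icc
  have hr : IntegrableOn (fun a => α * entropic P a X₁ + (1 - α) * entropic P a X₂)
      (Icc a₀ a₁) m := (hintm₁.const_mul α).add (hintm₂.const_mul (1 - α))
  have hlt : ∀ a ∈ Icc a₀ a₁, 0 < α * entropic P a X₁ + (1 - α) * entropic P a X₂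
      - entropic P a (fun ω => α * X₁ ω + (1 - α) * X₂ ω) := fun a ha =>
    sub_pos.2 (entropic_strict_convex (ha₀.trans_le ha.1) hmX₁ hmX₂ (hint₁ a ha) (hint₂ a ha)
      hnc hα)
  have hpos : 0 < ∫ a in Icc a₀ a₁, (α * entropic P a X₁ + (1 - α) * entropic P a X₂
      - entropic P a (fun ω => α * X₁ ω + (1 - α) * X₂ ω)) ∂m := by
    rw [setIntegral_pos_iff_support_of_nonneg_ae
      ((ae_restrict_iff' measurableSet_Icc).2 (ae_of_all _ fun a ha => (hlt a ha).le)) (hr.sub hi)]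
    -- The integrand is positive on all of `[a₀, a₁]`, which has full mass.
    rw [inter_eq_right.2 fun a ha => Function.mem_support.2 (hlt a ha).ne', hm]
    exact one_pos
  rw [integral_sub hr hi, integral_add (hintm₁.const_mul α) (hintm₂.const_mul (1 - α)),
    integral_const_mul, integral_const_mul] at hpos
  exact sub_pos.1 hpos
end
end

section
/- Let X be a real random variable with X ≥ 0 a.s. and let Y be an integrable real random variable such that X + Y ≥ 0 a.s. Then the right directional derivative of h at X in direction Y exists and equals E[h′(X)·Y]; that is, lim_{t↓0} (h(X + tY) − h(X))/t = E[h′(X)·Y]. -/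
/-!
For `t ∈ [0, 1]` the payoff `X + tY` is a convex combination of `X` and `X + Y`, hence a.s.
nonnegative. On the nonnegative half line `u ↦ e^{-u}` is 1-Lipschitz, so the difference quotient
in `t` of `F_a(t) = E[e^{-a(X+tY)}]` is dominated by `a|Y|`, and dominated convergence gives
`F_a'(0+) = -a E[Y e^{-aX}]`. The chain rule for `log` then yields the derivative
`-E[Y e^{-aX}] / F_a(0)` of the entropic risk measure for each `a`.

To integrate over `a`, note that `F_a(t) ≥ c := E[e^{-a₁(X+|Y|)}] > 0` uniformly in
`0 ≤ a ≤ a₁` and `t ∈ [0, 1]`. Since `log` is `1/c`-Lipschitz on `[c, ∞)`, the difference quotients of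
the entropic risk measures are bounded by `E|Y| / c`, so dominated convergence applies once more.
Fubini's theorem identifies the limit with `E[h′(X) Y]`.
-/

open MeasureTheory Filter Set
open scoped ENNReal

noncomputable section

variable {Ω : Type*} [MeasurableSpace Ω]

lemma abs_exp_neg_sub_le {u v : ℝ} (hu : 0 ≤ u) (hv : 0 ≤ v) :
    |Real.exp (-u) - Real.exp (-v)| ≤ |u - v| := by
  wlog h : u ≤ v generalizing u v
  · rw [abs_sub_comm, abs_sub_comm u v]
    exact this hv hu (le_of_not_ge h)
  have h1 : Real.exp (-v) ≤ Real.exp (-u) := Real.exp_le_exp.2 (by linarith)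
  rw [abs_of_nonneg (by linarith), abs_sub_comm, abs_of_nonneg (by linarith)]
  have h2 : Real.exp (-v) = Real.exp (-u) * Real.exp (-(v - u)) := by
    rw [← Real.exp_add]; ring_nf
  have h3 := Real.add_one_le_exp (-(v - u))
  have h4 : Real.exp (-u) ≤ 1 := Real.exp_le_one_iff.2 (by linarith)
  have h5 : Real.exp (-u) ≥ 0 := (Real.exp_pos _).le
  rw [h2]
  nlinarith

lemma abs_log_sub_log_le {c x y : ℝ} (hc : 0 < c) (hx : c ≤ x) (hy : c ≤ y) :
    |Real.log x - Real.log y| ≤ |x - y| / c := by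
  wlog h : y ≤ x generalizing x y
  · rw [abs_sub_comm, abs_sub_comm x y]
    exact this hy hx (le_of_not_ge h)
  have hy0 : 0 < y := hc.trans_le hy
  have hx0 : 0 < x := hc.trans_le hx
  have h1 : Real.log y ≤ Real.log x := Real.log_le_log hy0 h
  rw [abs_of_nonneg (by linarith), abs_of_nonneg (by linarith), ← Real.log_div hx0.ne' hy0.ne']
  calc Real.log (x / y) ≤ x / y - 1 := Real.log_le_sub_one_of_pos (by positivity)
    _ = (x - y) / y := by field_simp
    _ ≤ (x - y) / c := div_le_div_of_nonneg_left (by linarith) hc hy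

lemma integrable_exp_neg_mul (P : Measure Ω) [IsFiniteMeasure P] {a : ℝ} (ha : 0 ≤ a)
    {Z : Ω → ℝ} (hmZ : Measurable Z) (hZ : ∀ᵐ ω ∂P, 0 ≤ Z ω) :
    Integrable (fun ω => Real.exp (-a * Z ω)) P := by
  refine Integrable.of_bound (C := 1) (by fun_prop) ?_
  filter_upwards [hZ] with ω h
  rw [Real.norm_eq_abs, Real.abs_exp]
  exact Real.exp_le_one_iff.2 (by nlinarith)

lemma measurable_integral_exp (P : Measure Ω) [SFinite P] {Z : Ω → ℝ} (hmZ : Measurable Z) :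
    Measurable (fun a : ℝ => ∫ ω, Real.exp (-a * Z ω) ∂P) := by
  have : Measurable (Function.uncurry fun (a : ℝ) (ω : Ω) => Real.exp (-a * Z ω)) := by
    unfold Function.uncurry
    fun_prop
  exact (this.stronglyMeasurable.integral_prod_right).measurable

/-- The lower bound on the Laplace transforms, uniform over `0 ≤ a ≤ a₁` and over all
nonnegative payoffs dominated by `W`. -/
lemma integral_exp_lower_bound (P : Measure Ω) [IsFiniteMeasure P] {a a₁ : ℝ} (ha : 0 ≤ a)
    (ha₁ : a ≤ a₁) {Z W : Ω → ℝ} (hmZ : Measurable Z) (hmW : Measurable W)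
    (hZ : ∀ᵐ ω ∂P, 0 ≤ Z ω) (hZW : ∀ᵐ ω ∂P, Z ω ≤ W ω) :
    ∫ ω, Real.exp (-a₁ * W ω) ∂P ≤ ∫ ω, Real.exp (-a * Z ω) ∂P := by
  have hW : ∀ᵐ ω ∂P, 0 ≤ W ω := by
    filter_upwards [hZ, hZW] with ω h1 h2 using h1.trans h2
  refine integral_mono_ae (integrable_exp_neg_mul P (ha.trans ha₁) hmW hW)
    (integrable_exp_neg_mul P ha hmZ hZ) ?_
  filter_upwards [hZ, hZW] with ω h1 h2
  refine Real.exp_le_exp.2 ?_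
  have := mul_le_mul ha₁ h2 h1 (ha.trans ha₁)
  linarith

lemma integral_exp_lipschitz (P : Measure Ω) [IsFiniteMeasure P] {a t : ℝ} (ha : 0 ≤ a)
    (ht : 0 ≤ t) {X Y : Ω → ℝ} (hmX : Measurable X) (hmY : Measurable Y) (hYint : Integrable Y P)
    (hX : ∀ᵐ ω ∂P, 0 ≤ X ω) (hXt : ∀ᵐ ω ∂P, 0 ≤ X ω + t * Y ω) :
    |∫ ω, Real.exp (-a * (X ω + t * Y ω)) ∂P - ∫ ω, Real.exp (-a * X ω) ∂P|
      ≤ a * t * ∫ ω, |Y ω| ∂P := by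
  rw [← integral_sub (integrable_exp_neg_mul P ha (by fun_prop) hXt)
    (integrable_exp_neg_mul P ha hmX hX), ← Real.norm_eq_abs, ← integral_const_mul]
  refine norm_integral_le_of_norm_le (hYint.abs.const_mul _) ?_
  filter_upwards [hX, hXt] with ω h1 h2
  rw [Real.norm_eq_abs, neg_mul, neg_mul]
  refine (abs_exp_neg_sub_le (mul_nonneg ha h2) (mul_nonneg ha h1)).trans (le_of_eq ?_)
  rw [show a * (X ω + t * Y ω) - a * X ω = a * t * Y ω by ring, abs_mul,
    abs_of_nonneg (mul_nonneg ha ht)]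

/-- One-sided differentiation of the Laplace transform under the expectation. -/
lemma integral_exp_hasDerivWithinAt (P : Measure Ω) [IsFiniteMeasure P] {a : ℝ} (ha : 0 ≤ a)
    {X Y : Ω → ℝ} (hmX : Measurable X) (hmY : Measurable Y) (hYint : Integrable Y P)
    (hX : ∀ᵐ ω ∂P, 0 ≤ X ω) (hXt : ∀ t ∈ Icc (0 : ℝ) 1, ∀ᵐ ω ∂P, 0 ≤ X ω + t * Y ω) :
    HasDerivWithinAt (fun t : ℝ => ∫ ω, Real.exp (-a * (X ω + t * Y ω)) ∂P)
      (∫ ω, -a * Y ω * Real.exp (-a * X ω) ∂P) (Ioi 0) 0 := by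
  rw [hasDerivWithinAt_iff_tendsto_slope' (by simp)]
  have hev : ∀ᶠ t : ℝ in nhdsWithin 0 (Ioi 0), t ∈ Ioc (0 : ℝ) 1 :=
    Ioc_mem_nhdsGT one_pos
  have key : Tendsto
      (fun t : ℝ => ∫ ω, t⁻¹ * (Real.exp (-a * (X ω + t * Y ω)) - Real.exp (-a * X ω)) ∂P)
      (nhdsWithin 0 (Ioi 0)) (nhds (∫ ω, -a * Y ω * Real.exp (-a * X ω) ∂P)) := by
    refine tendsto_integral_filter_of_dominated_convergence (fun ω => a * |Y ω|) ?_ ?_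
      (hYint.abs.const_mul _) ?_
    · exact Eventually.of_forall fun t => by fun_prop
    · filter_upwards [hev] with t ht
      filter_upwards [hX, hXt t ⟨ht.1.le, ht.2⟩] with ω h1 h2
      have h3 := abs_exp_neg_sub_le (mul_nonneg ha h2) (mul_nonneg ha h1)
      rw [show a * (X ω + t * Y ω) - a * X ω = t * (a * Y ω) by ring, abs_mul, abs_mul,
        abs_of_pos ht.1, abs_of_nonneg ha] at h3
      rw [Real.norm_eq_abs, abs_mul, abs_inv, abs_of_pos ht.1, inv_mul_le_iff₀ ht.1,
        neg_mul, neg_mul]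
      exact h3
    · refine Eventually.of_forall fun ω => ?_
      have hd : HasDerivAt (fun t : ℝ => Real.exp (-a * (X ω + t * Y ω)))
          (-a * Y ω * Real.exp (-a * X ω)) 0 := by
        have h := ((((hasDerivAt_id' (0 : ℝ)).mul_const (Y ω)).const_add (X ω)).const_mul (-a)).exp
        convert h using 1
        simp only [zero_mul, add_zero]
        ring
      have := (hasDerivWithinAt_iff_tendsto_slope' (by simp)).1
        (hd.hasDerivWithinAt (s := Ioi (0 : ℝ)))
      refine this.congr fun t => ?_
      simp [slope_def_field]
      ring
  refine key.congr' ?_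
  filter_upwards [hev] with t ht
  rw [integral_const_mul, integral_sub
    (integrable_exp_neg_mul P ha (by fun_prop) (hXt t ⟨ht.1.le, ht.2⟩))
    (integrable_exp_neg_mul P ha hmX hX)]
  simp [slope_def_field]
  ring

/-- the right directional (Gâteaux) derivative of the WERM `h` at `X ≥ 0` in an
integrable direction `Y` with `X + Y ≥ 0` equals `E[h′(X)·Y]`. -/
theorem werm_gateaux_derivative (P : Measure Ω) [IsProbabilityMeasure P]
    (a₀ a₁ : ℝ) (ha₀ : 0 < a₀) (ha₀₁ : a₀ < a₁)
    (m : Measure ℝ) [IsProbabilityMeasure m] (hm : m (Set.Icc a₀ a₁) = 1)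
    (X Y : Ω → ℝ) (hmX : Measurable X) (hX0 : ∀ᵐ ω ∂P, 0 ≤ X ω)
    (hmY : Measurable Y) (hYint : Integrable Y P)
    (hXY0 : ∀ᵐ ω ∂P, 0 ≤ X ω + Y ω) :
    Tendsto
      (fun t : ℝ =>
        (werm P m a₀ a₁ (fun ω => X ω + t * Y ω) - werm P m a₀ a₁ X) / t)
      (nhdsWithin 0 (Set.Ioi 0))
      (nhds (∫ ω, hprime P m a₀ a₁ X ω * Y ω ∂P)) := by
  have hXt : ∀ t ∈ Icc (0 : ℝ) 1, ∀ᵐ ω ∂P, 0 ≤ X ω + t * Y ω := by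
    intro t ht
    filter_upwards [hX0, hXY0] with ω h1 h2
    nlinarith [ht.1, ht.2, mul_nonneg ht.1 h2, mul_nonneg (sub_nonneg.2 ht.2) h1]
  have hle : ∀ t ∈ Icc (0 : ℝ) 1, ∀ᵐ ω ∂P, X ω + t * Y ω ≤ X ω + |Y ω| := by
    intro t ht
    refine Eventually.of_forall fun ω => ?_
    have h1 : t * Y ω ≤ t * |Y ω| := mul_le_mul_of_nonneg_left (le_abs_self _) ht.1
    have h2 : t * |Y ω| ≤ 1 * |Y ω| := mul_le_mul_of_nonneg_right ht.2 (abs_nonneg _)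
    linarith
  have hmW : Measurable fun ω => X ω + |Y ω| := hmX.add hmY.abs
  have hW : ∀ᵐ ω ∂P, 0 ≤ X ω + |Y ω| := by
    filter_upwards [hX0] with ω h using add_nonneg h (abs_nonneg _)
  set c : ℝ := ∫ ω, Real.exp (-a₁ * (X ω + |Y ω|)) ∂P with hcdef
  have hc : 0 < c :=
    integral_exp_pos (integrable_exp_neg_mul P (ha₀.le.trans ha₀₁.le) hmW hW)
  have hlow : ∀ a ∈ Icc a₀ a₁, ∀ t ∈ Icc (0 : ℝ) 1,
      c ≤ ∫ ω, Real.exp (-a * (X ω + t * Y ω)) ∂P := fun a ha t ht =>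
    integral_exp_lower_bound P (ha₀.le.trans ha.1) ha.2 (by fun_prop) hmW (hXt t ht) (hle t ht)
  have hlowX : ∀ a ∈ Icc a₀ a₁, c ≤ ∫ ω, Real.exp (-a * X ω) ∂P := fun a ha => by
    simpa using hlow a ha 0 (by simp)
  have hup : ∀ a ∈ Icc a₀ a₁, ∀ t ∈ Icc (0 : ℝ) 1,
      ∫ ω, Real.exp (-a * (X ω + t * Y ω)) ∂P ≤ 1 := by
    intro a ha t ht
    have ha' : 0 ≤ a := ha₀.le.trans ha.1
    have h := integral_mono_ae (integrable_exp_neg_mul P ha' (by fun_prop) (hXt t ht))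
      (integrable_const (1 : ℝ)) (by
        filter_upwards [hXt t ht] with ω h
        exact Real.exp_le_one_iff.2 (by nlinarith))
    simpa using h
  have hment : ∀ Z : Ω → ℝ, Measurable Z → Measurable fun a => entropic P a Z := by
    intro Z hZ
    unfold entropic
    have := measurable_integral_exp P hZ
    fun_prop
  have hIcc : ∀ᵐ a ∂(m.restrict (Icc a₀ a₁)), a ∈ Icc a₀ a₁ := ae_restrict_mem measurableSet_Icc
  have hient : ∀ t ∈ Icc (0 : ℝ) 1,
      Integrable (fun a => entropic P a (fun ω => X ω + t * Y ω)) (m.restrict (Icc a₀ a₁)) := by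
    intro t ht
    refine Integrable.of_bound (C := 1 / a₀ * -Real.log c)
      (hment _ (by fun_prop)).aestronglyMeasurable ?_
    filter_upwards [hIcc] with a ha
    have hF1 := hlow a ha t ht
    have h1 := Real.log_le_log hc hF1
    have h2 := Real.log_nonpos (hc.le.trans hF1) (hup a ha t ht)
    have ha' : 0 < a := ha₀.trans_le ha.1
    unfold entropic
    rw [Real.norm_eq_abs, abs_mul, abs_of_pos (by positivity), abs_of_nonpos h2]
    exact mul_le_mul (one_div_le_one_div_of_le ha₀ ha.1) (by linarith) (by linarith)
      (by positivity)
  have hientX : Integrable (fun a => entropic P a X) (m.restrict (Icc a₀ a₁)) := by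
    simpa using hient 0 (by simp)
  have hev : ∀ᶠ t : ℝ in nhdsWithin 0 (Ioi 0), t ∈ Ioc (0 : ℝ) 1 := Ioc_mem_nhdsGT one_pos
  have key : Tendsto (fun t : ℝ => ∫ a in Icc a₀ a₁,
        (entropic P a (fun ω => X ω + t * Y ω) - entropic P a X) / t ∂m)
      (nhdsWithin 0 (Ioi 0))
      (nhds (∫ a in Icc a₀ a₁, ∫ ω,
        -(Real.exp (-a * X ω) / (∫ ω', Real.exp (-a * X ω') ∂P)) * Y ω ∂P ∂m)) := by
    refine tendsto_integral_filter_of_dominated_convergence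
      (fun _ => (∫ ω, |Y ω| ∂P) / c) ?_ ?_ (integrable_const _) ?_
    · exact Eventually.of_forall fun t => (((hment _ (by fun_prop)).sub
        (hment _ hmX)).div_const t).aestronglyMeasurable
    · filter_upwards [hev] with t ht
      filter_upwards [hIcc] with a ha
      have ha' : 0 < a := ha₀.trans_le ha.1
      have ht' : t ∈ Icc (0 : ℝ) 1 := ⟨ht.1.le, ht.2⟩
      have h1 := abs_log_sub_log_le hc (hlow a ha t ht') (hlowX a ha)
      have h2 := integral_exp_lipschitz P ha'.le ht.1.le hmX hmY hYint hX0 (hXt t ht')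
      have h3 := h1.trans (div_le_div_of_nonneg_right h2 hc.le)
      unfold entropic
      rw [← mul_sub, Real.norm_eq_abs, abs_div, abs_mul, abs_of_pos ht.1,
        abs_of_pos (by positivity : 0 < 1 / a), div_le_iff₀ ht.1]
      calc _ ≤ 1 / a * (a * t * (∫ ω, |Y ω| ∂P) / c) := by gcongr
        _ = _ := by field_simp
    · filter_upwards [hIcc] with a ha
      have ha' : 0 < a := ha₀.trans_le ha.1
      have hF := hc.trans_le (hlowX a ha)
      have hd := integral_exp_hasDerivWithinAt P ha'.le hmX hmY hYint hX0 hXt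
      have hl := (hd.log (by simpa using hF.ne')).const_mul (1 / a)
      have hs := (hasDerivWithinAt_iff_tendsto_slope' (by simp)).1 hl
      have hval : ∫ ω, -(Real.exp (-a * X ω) / (∫ ω', Real.exp (-a * X ω') ∂P)) * Y ω ∂P
          = 1 / a * ((∫ ω, -a * Y ω * Real.exp (-a * X ω) ∂P)
            / ∫ ω, Real.exp (-a * (X ω + 0 * Y ω)) ∂P) := by
        simp only [zero_mul, add_zero]
        rw [← integral_div, ← integral_const_mul]
        congr 1
        ext ω
        field_simp
      rw [hval]
      refine hs.congr fun t => ?_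
      simp [slope_def_field, entropic]
  have hfub : ∫ a in Icc a₀ a₁, ∫ ω,
        -(Real.exp (-a * X ω) / (∫ ω', Real.exp (-a * X ω') ∂P)) * Y ω ∂P ∂m
      = ∫ ω, hprime P m a₀ a₁ X ω * Y ω ∂P := by
    rw [integral_integral_swap]
    · congr 1
      ext ω
      rw [integral_mul_const, integral_neg, hprime]
    · have hdom : Integrable (fun z : ℝ × Ω => 1 / c * |Y z.2|)
          ((m.restrict (Icc a₀ a₁)).prod P) := (hYint.abs.comp_snd _).const_mul _
      have hmF := measurable_integral_exp P hmX
      have hae : ∀ᵐ z ∂((m.restrict (Icc a₀ a₁)).prod P), z.1 ∈ Icc a₀ a₁ ∧ 0 ≤ X z.2 := by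
        have h1 := (Measure.quasiMeasurePreserving_fst
          (μ := m.restrict (Icc a₀ a₁)) (ν := P)).ae hIcc
        have h2 := (Measure.quasiMeasurePreserving_snd
          (μ := m.restrict (Icc a₀ a₁)) (ν := P)).ae hX0
        exact h1.and h2
      refine hdom.mono' ?_ ?_
      · refine Measurable.aestronglyMeasurable ?_
        unfold Function.uncurry
        have : Measurable fun z : ℝ × Ω => ∫ ω', Real.exp (-z.1 * X ω') ∂P :=
          hmF.comp measurable_fst
        fun_prop
      · filter_upwards [hae] with z hz
        have ha' : 0 < z.1 := ha₀.trans_le hz.1.1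
        have hF := hlowX z.1 hz.1
        have hF0 := hc.trans_le hF
        simp only [Function.uncurry]
        rw [Real.norm_eq_abs, abs_mul, abs_neg, abs_div, Real.abs_exp, abs_of_pos hF0]
        refine mul_le_mul_of_nonneg_right ?_ (abs_nonneg _)
        exact div_le_div₀ zero_le_one (Real.exp_le_one_iff.2 (by nlinarith [hz.2])) hc hF
  rw [← hfub]
  refine key.congr' ?_
  filter_upwards [hev] with t ht
  rw [integral_div, integral_sub (hient t ⟨ht.1.le, ht.2⟩) hientX, werm, werm]
end
end

section
/- For every x > 0, the risk minimization problem minimize h(X) over X ∈ 𝒳(x) has a solution, and the solution is unique up to almost sure equality: if X₁* and X₂* both attain the minimal value, then X₁* = X₂* a.s. -/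
/-!
Everything rests on one identity: with `u = e^{-aX/2}` and `v = e^{-aY/2}`,
`E[(su - tv)²] = s² E[e^{-aX}] + t² E[e^{-aY}] - 2st E[e^{-a(X+Y)/2}]` (`integral_sq_diff`).

*Uniqueness.* With normalizing weights `s`, `t` the identity is the Cauchy-Schwarz inequality
together with its equality case: each entropic risk measure is midpoint convex
(`entropic_midpt_le`), and equality forces `X - Y` to be a.s. constant
(`exists_const_of_entropic_midpt_eq`). For two minimizers the convexity defect integrates to zero
against `m`, hence vanishes for some `a`, so the minimizers differ by a constant `c`; cash
invariance `h(Y + c) = h(Y) - c` (`entropic_add_const`) then gives `c = 0`.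

*Existence.* The budget constraint keeps `E[e^{-aX}]` away from zero uniformly over feasible `X` and
`a ∈ [a₀, a₁]` (`exists_lap_lower_bound`), so `h` is bounded below. Among near-minimizers of `h`,
choosing near-minimizers of `E[e^{-X}]` makes `e^{-Xₙ/2}` Cauchy in `L²` by the identity with
`s = t = 1`, and a fast choice converges a.s. (`exists_minimizing_seq`). Fatou's lemma shows that
the limit of `Xₙ` is a.s. finite and feasible (`exists_feasible_limit`), and `h(Xₙ)` converges to
its risk by dominated convergence (`tendsto_werm`).
-/

open MeasureTheory Filter Set
open scoped ENNReal

noncomputable section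

variable {Ω : Type*} [MeasurableSpace Ω]

/-! ### Laplace transforms and the entropic risk measure -/

/-- The Laplace transform `E[e^{-aX}]`, so that `entropic P a X = (1/a) log (lap P a X)`. -/
def lap (P : Measure Ω) (a : ℝ) (X : Ω → ℝ) : ℝ := ∫ ω, Real.exp (-a * X ω) ∂P

/-- The midpoint `(X + Y)/2` of two payoffs. -/
def midpt (X Y : Ω → ℝ) (ω : Ω) : ℝ := (X ω + Y ω) / 2

section Laplace

variable {P : Measure Ω} {X Y : Ω → ℝ} {a : ℝ}

lemma Lpos.midpt (hX : Lpos P X) (hY : Lpos P Y) : Lpos P (midpt X Y) := by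
  refine ⟨(hX.1.add hY.1).div_const 2, ?_⟩
  filter_upwards [hX.2, hY.2] with ω h1 h2
  simp only [_root_.midpt]
  positivity

variable [IsProbabilityMeasure P]

lemma lap_integrable (hX : Lpos P X) (ha : 0 ≤ a) :
    Integrable (fun ω => Real.exp (-a * X ω)) P := by
  have h1 := hX.1
  refine Integrable.of_bound (C := 1) (by fun_prop) ?_
  filter_upwards [hX.2] with ω hω
  rw [Real.norm_eq_abs, abs_of_pos (Real.exp_pos _), Real.exp_le_one_iff]
  nlinarith [mul_nonneg ha hω]

lemma lap_pos (hX : Lpos P X) (ha : 0 ≤ a) : 0 < lap P a X :=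
  integral_exp_pos (lap_integrable hX ha)

lemma lap_le_one (hX : Lpos P X) (ha : 0 ≤ a) : lap P a X ≤ 1 := by
  have : lap P a X ≤ ∫ _, (1 : ℝ) ∂P := by
    refine integral_mono_ae (lap_integrable hX ha) (integrable_const _) ?_
    filter_upwards [hX.2] with ω hω
    rw [Real.exp_le_one_iff]
    nlinarith [mul_nonneg ha hω]
  simpa using this

lemma sq_diff_expand (a s t x y : ℝ) :
    (s * Real.exp (-a * x / 2) - t * Real.exp (-a * y / 2)) ^ 2 =
      s ^ 2 * Real.exp (-a * x) + t ^ 2 * Real.exp (-a * y)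
        - 2 * s * t * Real.exp (-a * ((x + y) / 2)) := by
  have h1 : Real.exp (-a * x) = Real.exp (-a * x / 2) ^ 2 := by
    rw [← Real.exp_nat_mul]; congr 1; push_cast; ring
  have h2 : Real.exp (-a * y) = Real.exp (-a * y / 2) ^ 2 := by
    rw [← Real.exp_nat_mul]; congr 1; push_cast; ring
  have h3 : Real.exp (-a * ((x + y) / 2)) = Real.exp (-a * x / 2) * Real.exp (-a * y / 2) := by
    rw [← Real.exp_add]; congr 1; ring
  rw [h1, h2, h3]; ring

/-- The parallelogram-type identity behind both the convexity of `entropic` (with normalizing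
weights `s`, `t`) and the Cauchy estimate for minimizing sequences (with `s = t = 1`). -/
lemma integral_sq_diff (hX : Lpos P X) (hY : Lpos P Y) (ha : 0 ≤ a) (s t : ℝ) :
    Integrable (fun ω => (s * Real.exp (-a * X ω / 2) - t * Real.exp (-a * Y ω / 2)) ^ 2) P ∧
    ∫ ω, (s * Real.exp (-a * X ω / 2) - t * Real.exp (-a * Y ω / 2)) ^ 2 ∂P =
      s ^ 2 * lap P a X + t ^ 2 * lap P a Y - 2 * s * t * lap P a (midpt X Y) := by
  have i1 := (lap_integrable hX ha).const_mul (s ^ 2)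
  have i2 := (lap_integrable hY ha).const_mul (t ^ 2)
  have i3 := (lap_integrable (hX.midpt hY) ha).const_mul (2 * s * t)
  simp only [sq_diff_expand]
  refine ⟨(i1.add i2).sub i3, ?_⟩
  have e1 := integral_sub (i1.add i2) i3
  have e2 := integral_add i1 i2
  simp only [integral_const_mul, Pi.add_apply] at e1 e2
  rw [e2] at e1
  exact e1

lemma lap_midpt_le (hX : Lpos P X) (hY : Lpos P Y) (ha : 0 ≤ a) :
    lap P a (midpt X Y) ≤ √(lap P a X) * √(lap P a Y) := by
  have hx := Real.sqrt_pos.2 (lap_pos hX ha)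
  have hy := Real.sqrt_pos.2 (lap_pos hY ha)
  have h := (integral_sq_diff hX hY ha (√(lap P a Y)) (√(lap P a X))).2
  rw [Real.sq_sqrt (lap_pos hX ha).le, Real.sq_sqrt (lap_pos hY ha).le] at h
  have h0 : 0 ≤ ∫ ω, (√(lap P a Y) * Real.exp (-a * X ω / 2)
      - √(lap P a X) * Real.exp (-a * Y ω / 2)) ^ 2 ∂P := integral_nonneg fun _ => sq_nonneg _
  have hx2 := Real.sq_sqrt (lap_pos hX ha).le
  have hy2 := Real.sq_sqrt (lap_pos hY ha).le
  rw [h] at h0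
  have : 0 ≤ (√(lap P a X) * √(lap P a Y)) *
      (√(lap P a X) * √(lap P a Y) - lap P a (midpt X Y)) := by
    nlinarith
  have := nonneg_of_mul_nonneg_right this (mul_pos hx hy)
  linarith

/-- Midpoint convexity of the entropic risk measure. -/
lemma entropic_midpt_le (hX : Lpos P X) (hY : Lpos P Y) (ha : 0 < a) :
    entropic P a (midpt X Y) ≤ (entropic P a X + entropic P a Y) / 2 := by
  have hx := Real.sqrt_pos.2 (lap_pos hX ha.le)
  have hy := Real.sqrt_pos.2 (lap_pos hY ha.le)
  have h := Real.log_le_log (lap_pos (hX.midpt hY) ha.le) (lap_midpt_le hX hY ha.le)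
  rw [Real.log_mul hx.ne' hy.ne', Real.log_sqrt (lap_pos hX ha.le).le,
    Real.log_sqrt (lap_pos hY ha.le).le] at h
  change 1 / a * Real.log (lap P a (midpt X Y)) ≤
    (1 / a * Real.log (lap P a X) + 1 / a * Real.log (lap P a Y)) / 2
  have := mul_le_mul_of_nonneg_left h (one_div_pos.2 ha).le
  linarith

/-- Equality in midpoint convexity forces the payoffs to differ by a constant (the equality case
of the Cauchy-Schwarz inequality). -/
lemma exists_const_of_entropic_midpt_eq (hX : Lpos P X) (hY : Lpos P Y) (ha : 0 < a)
    (h : entropic P a (midpt X Y) = (entropic P a X + entropic P a Y) / 2) :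
    ∃ c, ∀ᵐ ω ∂P, X ω = Y ω + c := by
  have px := lap_pos hX ha.le
  have py := lap_pos hY ha.le
  have hx := Real.sqrt_pos.2 px
  have hy := Real.sqrt_pos.2 py
  have hm : lap P a (midpt X Y) = √(lap P a X) * √(lap P a Y) := by
    refine Real.log_injOn_pos (lap_pos (hX.midpt hY) ha.le) (mul_pos hx hy) ?_
    rw [Real.log_mul hx.ne' hy.ne', Real.log_sqrt px.le, Real.log_sqrt py.le]
    change 1 / a * Real.log (lap P a (midpt X Y)) =
      (1 / a * Real.log (lap P a X) + 1 / a * Real.log (lap P a Y)) / 2 at h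
    field_simp at h
    linarith
  obtain ⟨hi, he⟩ := integral_sq_diff hX hY ha.le (√(lap P a Y)) (√(lap P a X))
  have h0 : ∫ ω, (√(lap P a Y) * Real.exp (-a * X ω / 2)
      - √(lap P a X) * Real.exp (-a * Y ω / 2)) ^ 2 ∂P = 0 := by
    rw [he, hm, Real.sq_sqrt px.le, Real.sq_sqrt py.le]
    have hx2 := Real.sq_sqrt px.le
    have hy2 := Real.sq_sqrt py.le
    linear_combination (-2 * √(lap P a Y) ^ 2) * hx2 - 2 * lap P a X * hy2
  rw [integral_eq_zero_iff_of_nonneg (fun _ => sq_nonneg _) hi] at h0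
  refine ⟨(Real.log √(lap P a Y) - Real.log √(lap P a X)) * (2 / a), ?_⟩
  filter_upwards [h0] with ω hω
  have h1 : √(lap P a Y) * Real.exp (-a * X ω / 2) = √(lap P a X) * Real.exp (-a * Y ω / 2) := by
    have := pow_eq_zero_iff (two_ne_zero) |>.1 hω
    linarith
  have h2 := congrArg Real.log h1
  rw [Real.log_mul hy.ne' (Real.exp_ne_zero _), Real.log_mul hx.ne' (Real.exp_ne_zero _),
    Real.log_exp, Real.log_exp] at h2
  field_simp
  linarith

/-- Cash invariance. -/
lemma entropic_add_const (hY : Lpos P Y) (ha : 0 < a) {c : ℝ} (h : ∀ᵐ ω ∂P, X ω = Y ω + c) :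
    entropic P a X = entropic P a Y - c := by
  have h1 : lap P a X = Real.exp (-a * c) * lap P a Y := by
    rw [lap, lap, ← integral_const_mul]
    refine integral_congr_ae ?_
    filter_upwards [h] with ω hω
    rw [hω, ← Real.exp_add]; congr 1; ring
  change 1 / a * Real.log (lap P a X) = 1 / a * Real.log (lap P a Y) - c
  rw [h1, Real.log_mul (Real.exp_ne_zero _) (lap_pos hY ha.le).ne', Real.log_exp]
  field_simp
  ring

lemma measurable_entropic (hX : Measurable X) : Measurable fun a => entropic P a X := by
  have : StronglyMeasurable fun a : ℝ => ∫ ω, Real.exp (-a * X ω) ∂P := by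
    refine StronglyMeasurable.integral_prod_right' (f := fun p : ℝ × Ω => Real.exp (-p.1 * X p.2)) ?_
    exact Measurable.stronglyMeasurable (by fun_prop)
  have := this.measurable
  unfold entropic
  fun_prop

end Laplace

/-! ### Feasible payoffs -/

section Feasible

variable {P : Measure Ω} {ρ X Y : Ω → ℝ} {x : ℝ}

lemma feasible.midpt (hmρ : Measurable ρ) (hρ0 : ∀ᵐ ω ∂P, 0 < ρ ω)
    (hX : feasible P ρ x X) (hY : feasible P ρ x Y) : feasible P ρ x (midpt X Y) := by
  refine ⟨hX.1.midpt hY.1, ?_⟩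
  have hXm := hX.1.1
  have hYm := hY.1.1
  have e : budget P ρ (_root_.midpt X Y) =
      ENNReal.ofReal (1 / 2) * budget P ρ X + ENNReal.ofReal (1 / 2) * budget P ρ Y := by
    unfold budget
    rw [← lintegral_const_mul _ (by fun_prop), ← lintegral_const_mul _ (by fun_prop),
      ← lintegral_add_left (by fun_prop)]
    refine lintegral_congr_ae ?_
    filter_upwards [hρ0, hX.1.2, hY.1.2] with ω h0 h1 h2
    rw [← ENNReal.ofReal_mul (by norm_num), ← ENNReal.ofReal_mul (by norm_num),
      ← ENNReal.ofReal_add (by positivity) (by positivity)]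
    congr 1
    simp only [_root_.midpt]; ring
  rw [e]
  calc _ ≤ ENNReal.ofReal (1 / 2) * ENNReal.ofReal x + ENNReal.ofReal (1 / 2) * ENNReal.ofReal x := by
        gcongr
        exacts [hX.2, hY.2]
    _ = ENNReal.ofReal x := by
        rw [← add_mul, ← ENNReal.ofReal_add (by norm_num) (by norm_num)]; norm_num

variable [IsProbabilityMeasure P]

/-- The budget constraint bounds the Laplace transforms away from zero. The bound comes from
integrating the tangent-line inequality `e^{-a₁X} ≥ e^{-c}(1 + c - a₁X)` against the truncated
density `min ρ 1`, with `c` chosen so that `c - a₁X` has nonnegative integral. -/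
lemma exists_lap_lower_bound {a₀ a₁ : ℝ} (ha₀ : 0 < a₀)
    (hmρ : Measurable ρ) (hρ0 : ∀ᵐ ω ∂P, 0 < ρ ω) (hx : 0 < x) :
    ∃ δ : ℝ, 0 < δ ∧ ∀ X, feasible P ρ x X → ∀ a ∈ Icc a₀ a₁, δ ≤ lap P a X := by
  have hri : Integrable (fun ω => min (ρ ω) 1) P := by
    refine Integrable.of_bound (C := 1) (by fun_prop) ?_
    filter_upwards [hρ0] with ω h
    rw [Real.norm_eq_abs, abs_of_pos (lt_min h one_pos)]
    exact min_le_right _ _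
  set r := ∫ ω, min (ρ ω) 1 ∂P with hr
  have hrpos : 0 < r := by
    rw [hr, integral_pos_iff_support_of_nonneg_ae ?_ hri]
    · have : (Function.support fun ω => min (ρ ω) 1) =ᵐ[P] univ := by
        filter_upwards [hρ0] with ω h
        exact eq_true (lt_min h one_pos).ne'
      rw [measure_congr this]; simp
    · filter_upwards [hρ0] with ω h
      exact (lt_min h one_pos).le
  refine ⟨Real.exp (-(a₁ * x / r)) * r, by positivity, fun X hX a ha => ?_⟩
  have ha1 : 0 < a₁ := ha₀.trans_le (ha.1.trans ha.2)
  have hapos : 0 < a := ha₀.trans_le ha.1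
  have hXm := hX.1.1
  have hnn : 0 ≤ᵐ[P] fun ω => ρ ω * X ω := by
    filter_upwards [hρ0, hX.1.2] with ω h0 h1
    exact mul_nonneg h0.le h1
  have hρX : Integrable (fun ω => ρ ω * X ω) P := by
    refine ⟨by fun_prop, ?_⟩
    rw [hasFiniteIntegral_iff_ofReal hnn]
    exact lt_of_le_of_lt hX.2 ENNReal.ofReal_lt_top
  have hρXle : ∫ ω, ρ ω * X ω ∂P ≤ x := by
    rw [integral_eq_lintegral_of_nonneg_ae hnn (by fun_prop)]
    exact ENNReal.toReal_le_of_le_ofReal hx.le hX.2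
  set c := a₁ * x / r with hc
  have hcr : c * r = a₁ * x := by rw [hc]; field_simp
  have key : ∫ ω, (Real.exp (-c) * (1 + c) * min (ρ ω) 1
      - Real.exp (-c) * a₁ * (ρ ω * X ω)) ∂P ≤ lap P a X := by
    refine integral_mono_ae ((hri.const_mul _).sub (hρX.const_mul _))
      (lap_integrable hX.1 hapos.le) ?_
    filter_upwards [hρ0, hX.1.2] with ω h0 h1
    have t1 : Real.exp (-c) * (1 + c - a₁ * X ω) ≤ Real.exp (-a₁ * X ω) := by
      have e1 : Real.exp (-a₁ * X ω) = Real.exp (-c) * Real.exp (c - a₁ * X ω) := by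
        rw [← Real.exp_add]; congr 1; ring
      rw [e1]
      gcongr
      linarith [Real.add_one_le_exp (c - a₁ * X ω)]
    have t2 : Real.exp (-a₁ * X ω) ≤ Real.exp (-a * X ω) := by
      rw [Real.exp_le_exp]
      nlinarith [mul_le_mul_of_nonneg_right ha.2 h1]
    have p0 : 0 < min (ρ ω) 1 := lt_min h0 one_pos
    have t3 : min (ρ ω) 1 * Real.exp (-a * X ω) ≤ Real.exp (-a * X ω) :=
      mul_le_of_le_one_left (Real.exp_pos _).le (min_le_right _ _)
    have t4 : min (ρ ω) 1 * X ω ≤ ρ ω * X ω :=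
      mul_le_mul_of_nonneg_right (min_le_left _ _) h1
    have t5 := mul_le_mul_of_nonneg_left (t1.trans t2) p0.le
    have t6 := mul_le_mul_of_nonneg_left t4 (mul_pos (Real.exp_pos (-c)) ha1).le
    nlinarith
  rw [integral_sub (hri.const_mul _) (hρX.const_mul _), integral_const_mul, integral_const_mul,
    ← hr] at key
  have h7 := mul_le_mul_of_nonneg_left hρXle (mul_pos (Real.exp_pos (-c)) ha1).le
  calc Real.exp (-c) * r = Real.exp (-c) * (1 + c) * r - Real.exp (-c) * a₁ * x := by
        linear_combination -Real.exp (-c) * hcr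
    _ ≤ _ := by linarith

lemma exists_entropic_bound {a₀ a₁ : ℝ} (ha₀ : 0 < a₀)
    (hmρ : Measurable ρ) (hρ0 : ∀ᵐ ω ∂P, 0 < ρ ω) (hx : 0 < x) :
    ∃ C : ℝ, ∀ X, feasible P ρ x X → ∀ a ∈ Icc a₀ a₁, ‖entropic P a X‖ ≤ C := by
  obtain ⟨δ, hδ, h⟩ := exists_lap_lower_bound (a₁ := a₁) ha₀ hmρ hρ0 hx
  refine ⟨1 / a₀ * -Real.log δ, fun X hX a ha => ?_⟩
  have hapos : 0 < a := ha₀.trans_le ha.1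
  have h1 := Real.log_le_log hδ (h X hX a ha)
  have h2 := Real.log_nonpos (lap_pos hX.1 hapos.le).le (lap_le_one hX.1 hapos.le)
  change ‖1 / a * Real.log (lap P a X)‖ ≤ _
  rw [norm_mul, Real.norm_eq_abs, Real.norm_eq_abs, abs_of_pos (one_div_pos.2 hapos),
    abs_of_nonpos h2]
  gcongr
  · linarith
  · exact ha.1

end Feasible

/-! ### Minimizing sequences and their limits -/

section Existence

open scoped Topology

variable {P : Measure Ω}

/-- If `e^{-Xₙ/2}` converges a.s. and the budgets are bounded, then `Xₙ` converges a.s. to a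
feasible payoff: by Fatou's lemma the limit cannot be infinite on a set of positive measure. -/
lemma exists_feasible_limit {ρ : Ω → ℝ} {x : ℝ} (hmρ : Measurable ρ)
    (hρ0 : ∀ᵐ ω ∂P, 0 < ρ ω) {X : ℕ → Ω → ℝ} (hX : ∀ n, feasible P ρ x (X n))
    (hlim : ∀ᵐ ω ∂P, ∃ l, Tendsto (fun n => Real.exp (-1 * X n ω / 2)) atTop (𝓝 l)) :
    ∃ Z, feasible P ρ x Z ∧ ∀ᵐ ω ∂P, Tendsto (fun n => X n ω) atTop (𝓝 (Z ω)) := by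
  have hXm : ∀ n, Measurable (X n) := fun n => (hX n).1.1
  have hfatou : ∫⁻ ω, liminf (fun n => ENNReal.ofReal (ρ ω * X n ω)) atTop ∂P ≤
      ENNReal.ofReal x := by
    refine (lintegral_liminf_le fun n => ?_).trans ?_
    · have := hXm n; fun_prop
    · exact liminf_le_of_le (h := fun b hb => by
        obtain ⟨n, hn⟩ := hb.exists
        exact hn.trans (hX n).2)
  have hfin : ∀ᵐ ω ∂P, liminf (fun n => ENNReal.ofReal (ρ ω * X n ω)) atTop < ⊤ := by
    refine ae_lt_top (Measurable.liminf fun n => ?_) (hfatou.trans_lt ENNReal.ofReal_lt_top).ne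
    have := hXm n; fun_prop
  have hconv : ∀ᵐ ω ∂P, Tendsto (fun n => X n ω) atTop
      (𝓝 (liminf (fun n => X n ω) atTop)) := by
    filter_upwards [hlim, hfin, hρ0] with ω ⟨l, hl⟩ hf h0
    suffices ∃ z, Tendsto (fun n => X n ω) atTop (𝓝 z) by
      obtain ⟨z, hz⟩ := this
      rwa [hz.liminf_eq]
    have hXlog : ∀ n, X n ω = -2 * Real.log (Real.exp (-1 * X n ω / 2)) := fun n => by
      rw [Real.log_exp]; ring
    by_cases hl0 : l = 0
    · exfalso
      have htop : Tendsto (fun n => X n ω) atTop atTop := by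
        have h1 : Tendsto (fun n => Real.exp (-1 * X n ω / 2)) atTop (𝓝[>] 0) :=
          tendsto_nhdsWithin_iff.2 ⟨hl0 ▸ hl, Eventually.of_forall fun n => Real.exp_pos _⟩
        have h2 := (Real.tendsto_log_nhdsGT_zero.comp h1).const_mul_atBot_of_neg
          (show (-2 : ℝ) < 0 by norm_num)
        refine h2.congr fun n => (hXlog n).symm
      have h3 := ENNReal.tendsto_ofReal_atTop.comp (htop.const_mul_atTop h0)
      have h4 := h3.liminf_eq
      simp only [Function.comp_def] at h4
      exact hf.ne h4
    · refine ⟨-2 * Real.log l, ?_⟩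
      exact ((hl.log hl0).const_mul (-2)).congr fun n => (hXlog n).symm
  refine ⟨fun ω => liminf (fun n => X n ω) atTop, ⟨⟨Measurable.liminf hXm, ?_⟩, ?_⟩, hconv⟩
  · filter_upwards [hconv, ae_all_iff.2 fun n => (hX n).1.2] with ω h h'
    exact ge_of_tendsto' h h'
  · refine le_trans (le_of_eq (lintegral_congr_ae ?_)) hfatou
    filter_upwards [hconv] with ω h
    exact ((ENNReal.continuous_ofReal.tendsto _).comp (h.const_mul (ρ ω))).liminf_eq.symm

variable [IsProbabilityMeasure P]

/-- A Komlós-type selection. Let `H` be midpoint convex and bounded below on a midpoint-closed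
family `F` of nonnegative payoffs. Among near-minimizers of `H`, elements that nearly minimize
`E[e^{-X}]` as well form a minimizing sequence for which `e^{-X/2}` is Cauchy in `L²`, fast enough
to converge almost surely. -/
lemma exists_minimizing_seq {F : Set (Ω → ℝ)} {H : (Ω → ℝ) → ℝ}
    (hF : ∀ X ∈ F, Lpos P X) (hne : F.Nonempty)
    (hmid : ∀ X ∈ F, ∀ Y ∈ F, midpt X Y ∈ F)
    (hH : ∀ X ∈ F, ∀ Y ∈ F, H (midpt X Y) ≤ (H X + H Y) / 2)
    (hb : BddBelow (H '' F)) :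
    ∃ X : ℕ → Ω → ℝ, (∀ n, X n ∈ F) ∧
      Tendsto (fun n => H (X n)) atTop (𝓝 (sInf (H '' F))) ∧
      ∀ᵐ ω ∂P, ∃ l, Tendsto (fun n => Real.exp (-1 * X n ω / 2)) atTop (𝓝 l) := by
  set γ := sInf (H '' F) with hγ
  let K : ℕ → Set (Ω → ℝ) := fun n => {X | X ∈ F ∧ H X ≤ γ + 1 / ((n : ℝ) + 1)}
  have hKne : ∀ n, (K n).Nonempty := fun n => by
    obtain ⟨_, ⟨X, hX, rfl⟩, h⟩ := Real.lt_sInf_add_pos (hne.image H)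
      (show (0 : ℝ) < 1 / ((n : ℝ) + 1) by positivity)
    exact ⟨X, hX, h.le⟩
  have hKanti : Antitone K := fun n k hnk X hX =>
    ⟨hX.1, hX.2.trans (by gcongr)⟩
  let s : ℕ → ℝ := fun n => sInf (lap P 1 '' K n)
  have hbd : ∀ n, BddBelow (lap P 1 '' K n) := fun n => by
    refine ⟨0, ?_⟩
    rintro _ ⟨X, hX, rfl⟩
    exact (lap_pos (hF X hX.1) zero_le_one).le
  have hs_mono : Monotone s := fun n k hnk =>
    csInf_le_csInf (hbd n) ((hKne k).image _) (image_mono (hKanti hnk))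
  have hs_bdd : BddAbove (range s) := by
    refine ⟨1, ?_⟩
    rintro _ ⟨n, rfl⟩
    obtain ⟨X, hX⟩ := hKne n
    exact (csInf_le (hbd n) ⟨X, hX, rfl⟩).trans (lap_le_one (hF X hX.1) zero_le_one)
  set S := ⨆ n, s n with hS
  have hsle : ∀ n, s n ≤ S := fun n => le_ciSup hs_bdd n
  have hε : ∀ k : ℕ, (0 : ℝ) < (1 / 4) ^ k := fun k => by positivity
  obtain ⟨φ, hφ, hφs⟩ := extraction_forall_of_eventually
    (P := fun k n => S - (1 / 4 : ℝ) ^ k < s n)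
    fun k => (tendsto_atTop_ciSup hs_mono hs_bdd).eventually
      (lt_mem_nhds (sub_lt_self S (hε k)))
  have hsel : ∀ k, ∃ X ∈ K (φ k), lap P 1 X < S + (1 / 4 : ℝ) ^ k := fun k => by
    obtain ⟨_, ⟨X, hX, rfl⟩, h⟩ := Real.lt_sInf_add_pos ((hKne (φ k)).image (lap P 1)) (hε k)
    exact ⟨X, hX, h.trans_le (add_le_add_left (hsle _) _)⟩
  choose X hXK hXl using hsel
  refine ⟨X, fun n => (hXK n).1, ?_, ?_⟩
  · refine tendsto_of_tendsto_of_tendsto_of_le_of_le tendsto_const_nhds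
      (h := fun n : ℕ => γ + 1 / ((n : ℝ) + 1)) ?_ ?_ ?_
    · simpa using tendsto_one_div_add_atTop_nhds_zero_nat.const_add γ
    · exact fun n => csInf_le hb ⟨X n, (hXK n).1, rfl⟩
    · exact fun n => (hKanti (hφ.le_apply) (hXK n)).2
  · have hXm : ∀ n, Measurable (X n) := fun n => (hF _ (hXK n).1).1
    refine Lp.ae_tendsto_of_cauchy_eLpNorm (p := 2)
      (B := fun N => ENNReal.ofReal (2 * (1 / 2 : ℝ) ^ N))
      (fun n => by have := hXm n; fun_prop) one_le_two ?_ ?_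
    · have hsum : Summable fun N : ℕ => 2 * (1 / 2 : ℝ) ^ N :=
        (summable_geometric_of_lt_one (by norm_num) (by norm_num)).mul_left 2
      exact hsum.tsum_ofReal_ne_top
    · intro N n k hn hk
      have hnK := hKanti (hφ.monotone hn) (hXK n)
      have hkK := hKanti (hφ.monotone hk) (hXK k)
      have hmK : midpt (X n) (X k) ∈ K (φ N) := by
        refine ⟨hmid _ hnK.1 _ hkK.1, (hH _ hnK.1 _ hkK.1).trans ?_⟩
        linarith [hnK.2, hkK.2]
      have h1 : s (φ N) ≤ lap P 1 (midpt (X n) (X k)) := csInf_le (hbd _) ⟨_, hmK, rfl⟩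
      have h2 := hφs N
      have hn' : (1 / 4 : ℝ) ^ n ≤ (1 / 4) ^ N :=
        pow_le_pow_of_le_one (by norm_num) (by norm_num) hn
      have hk' : (1 / 4 : ℝ) ^ k ≤ (1 / 4) ^ N :=
        pow_le_pow_of_le_one (by norm_num) (by norm_num) hk
      obtain ⟨hi, he⟩ := integral_sq_diff (hF _ hnK.1) (hF _ hkK.1) zero_le_one 1 1
      simp only [one_mul, one_pow, mul_one] at hi he
      have hn2 := hXm n
      have hk2 := hXm k
      have hmem : MemLp ((fun ω => Real.exp (-1 * X n ω / 2)) -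
          fun ω => Real.exp (-1 * X k ω / 2)) 2 P :=
        (memLp_two_iff_integrable_sq (by fun_prop)).2 hi
      change eLpNorm ((fun ω => Real.exp (-1 * X n ω / 2)) -
          fun ω => Real.exp (-1 * X k ω / 2)) 2 P < _
      rw [hmem.eLpNorm_eq_integral_rpow_norm two_ne_zero ENNReal.ofNat_ne_top,
        ENNReal.ofReal_lt_ofReal_iff (by positivity)]
      have e : ∫ ω, ‖((fun ω => Real.exp (-1 * X n ω / 2)) -
          fun ω => Real.exp (-1 * X k ω / 2)) ω‖ ^ (2 : ℝ≥0∞).toReal ∂P =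
          ∫ ω, (Real.exp (-1 * X n ω / 2) - Real.exp (-1 * X k ω / 2)) ^ 2 ∂P := by
        refine integral_congr_ae (Eventually.of_forall fun ω => ?_)
        simp
      rw [e, he]
      have hp : (2 * (1 / 2 : ℝ) ^ N) ^ 2 = 4 * (1 / 4) ^ N := by
        rw [mul_pow, ← pow_mul, mul_comm N 2, pow_mul]; norm_num
      have h3 : ((2 : ℝ≥0∞).toReal)⁻¹ = 1 / 2 := by norm_num
      rw [h3, ← Real.sqrt_eq_rpow]
      rw [Real.sqrt_lt' (by positivity), hp]
      linarith [hXl n, hXl k]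

/-- Dominated convergence in `ω`, then in `a`; the bound `C` of the second step is uniform. -/
lemma tendsto_werm {m : Measure ℝ} [IsProbabilityMeasure m] {a₀ a₁ C : ℝ} (ha₀ : 0 < a₀)
    {X : ℕ → Ω → ℝ} {Z : Ω → ℝ} (hX : ∀ n, Lpos P (X n)) (hZ : Lpos P Z)
    (hC : ∀ n, ∀ a ∈ Icc a₀ a₁, ‖entropic P a (X n)‖ ≤ C)
    (h : ∀ᵐ ω ∂P, Tendsto (fun n => X n ω) atTop (𝓝 (Z ω))) :
    Tendsto (fun n => werm P m a₀ a₁ (X n)) atTop (𝓝 (werm P m a₀ a₁ Z)) := by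
  refine tendsto_integral_of_dominated_convergence (fun _ => C)
    (fun n => (measurable_entropic (hX n).1).aestronglyMeasurable) (integrable_const _)
    (fun n => (ae_restrict_iff' measurableSet_Icc).2 (Eventually.of_forall (hC n)))
    ((ae_restrict_iff' measurableSet_Icc).2 (Eventually.of_forall fun a ha => ?_))
  have hapos : 0 < a := ha₀.trans_le ha.1
  have hl : Tendsto (fun n => lap P a (X n)) atTop (𝓝 (lap P a Z)) := by
    refine tendsto_integral_of_dominated_convergence (fun _ => 1)
      (fun n => (lap_integrable (hX n) hapos.le).aestronglyMeasurable) (integrable_const _)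
      (fun n => ?_) ?_
    · filter_upwards [(hX n).2] with ω hω
      rw [Real.norm_eq_abs, abs_of_pos (Real.exp_pos _), Real.exp_le_one_iff]
      nlinarith [mul_nonneg hapos.le hω]
    · filter_upwards [h] with ω hω
      exact (Real.continuous_exp.tendsto _).comp (hω.const_mul (-a))
  exact (hl.log (lap_pos hZ hapos.le).ne').const_mul (1 / a)

end Existence

/-- for every `x > 0` the risk minimization problem `min h(X)` over `𝒳(x)` has
a solution, unique up to a.s. equality. -/
theorem risk_minimization_exists_unique (P : Measure Ω) [IsProbabilityMeasure P]
    (a₀ a₁ : ℝ) (ha₀ : 0 < a₀) (ha₀₁ : a₀ < a₁)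
    (m : Measure ℝ) [IsProbabilityMeasure m] (hm : m (Set.Icc a₀ a₁) = 1)
    (ρ : Ω → ℝ) (hmρ : Measurable ρ) (hρ0 : ∀ᵐ ω ∂P, 0 < ρ ω) (hρint : Integrable ρ P)
    (x : ℝ) (hx : 0 < x) :
    (∃ X, feasible P ρ x X ∧
        ∀ Y, feasible P ρ x Y → werm P m a₀ a₁ X ≤ werm P m a₀ a₁ Y) ∧
    (∀ X₁ X₂, feasible P ρ x X₁ →
        (∀ Y, feasible P ρ x Y → werm P m a₀ a₁ X₁ ≤ werm P m a₀ a₁ Y) →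
      feasible P ρ x X₂ →
        (∀ Y, feasible P ρ x Y → werm P m a₀ a₁ X₂ ≤ werm P m a₀ a₁ Y) →
      X₁ =ᵐ[P] X₂) := by
  obtain ⟨C, hC⟩ := exists_entropic_bound (a₁ := a₁) ha₀ hmρ hρ0 hx
  have hint : ∀ X, feasible P ρ x X →
      Integrable (fun a => entropic P a X) (m.restrict (Icc a₀ a₁)) := fun X hX =>
    Integrable.of_bound (C := C) (measurable_entropic hX.1.1).aestronglyMeasurable
      ((ae_restrict_iff' measurableSet_Icc).2 (Eventually.of_forall (hC X hX)))
  have hmid : ∀ X, feasible P ρ x X → ∀ Y, feasible P ρ x Y → feasible P ρ x (midpt X Y) :=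
    fun X hX Y hY => hX.midpt hmρ hρ0 hY
  -- the convexity defect as a function of `a`
  have hdint : ∀ X, feasible P ρ x X → ∀ Y, feasible P ρ x Y →
      Integrable (fun a => (entropic P a X + entropic P a Y) / 2 - entropic P a (midpt X Y))
        (m.restrict (Icc a₀ a₁)) := fun X hX Y hY =>
    (((hint X hX).add (hint Y hY)).div_const 2).sub (hint _ (hmid X hX Y hY))
  have hdef : ∀ X, feasible P ρ x X → ∀ Y, feasible P ρ x Y →
      ∫ a in Icc a₀ a₁, ((entropic P a X + entropic P a Y) / 2 - entropic P a (midpt X Y)) ∂m =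
        (werm P m a₀ a₁ X + werm P m a₀ a₁ Y) / 2 - werm P m a₀ a₁ (midpt X Y) := by
    intro X hX Y hY
    have e1 := integral_sub (((hint X hX).add (hint Y hY)).div_const 2)
      (hint _ (hmid X hX Y hY))
    have e2 := integral_add (hint X hX) (hint Y hY)
    simp only [integral_div, Pi.add_apply] at e1 e2
    rw [e2] at e1
    exact e1
  have hdnn : ∀ X, feasible P ρ x X → ∀ Y, feasible P ρ x Y →
      0 ≤ᵐ[m.restrict (Icc a₀ a₁)]
        fun a => (entropic P a X + entropic P a Y) / 2 - entropic P a (midpt X Y) :=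
    fun X hX Y hY => (ae_restrict_iff' measurableSet_Icc).2 (Eventually.of_forall fun a ha =>
      sub_nonneg.2 (entropic_midpt_le hX.1 hY.1 (ha₀.trans_le ha.1)))
  have hconv : ∀ X, feasible P ρ x X → ∀ Y, feasible P ρ x Y →
      werm P m a₀ a₁ (midpt X Y) ≤ (werm P m a₀ a₁ X + werm P m a₀ a₁ Y) / 2 := by
    intro X hX Y hY
    have := integral_nonneg_of_ae (hdnn X hX Y hY)
    rw [hdef X hX Y hY] at this
    linarith
  constructor
  · have hb : BddBelow (werm P m a₀ a₁ '' {X | feasible P ρ x X}) := by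
      refine ⟨-C, ?_⟩
      rintro _ ⟨X, hX, rfl⟩
      have h := norm_setIntegral_le_of_norm_le_const (μ := m) (s := Icc a₀ a₁)
        (by rw [hm]; exact ENNReal.one_lt_top) (hC X hX)
      rw [measureReal_def, hm, ENNReal.toReal_one, mul_one] at h
      exact neg_le_of_abs_le h
    have hne : {X | feasible P ρ x X}.Nonempty :=
      ⟨fun _ => 0, ⟨measurable_const, by simp⟩, by simp [budget]⟩
    obtain ⟨X, hXF, hXγ, hXl⟩ := exists_minimizing_seq (P := P) (fun X hX => hX.1) hne
      hmid hconv hb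
    obtain ⟨Z, hZ, hXZ⟩ := exists_feasible_limit hmρ hρ0 hXF hXl
    refine ⟨Z, hZ, fun Y hY => ?_⟩
    have h1 := tendsto_werm (m := m) ha₀ (fun n => (hXF n).1) hZ.1 (fun n => hC _ (hXF n)) hXZ
    rw [tendsto_nhds_unique h1 hXγ]
    exact csInf_le hb ⟨Y, hY, rfl⟩
  · intro X₁ X₂ hX₁ hmin₁ hX₂ hmin₂
    have heq : werm P m a₀ a₁ X₁ = werm P m a₀ a₁ X₂ := le_antisymm (hmin₁ _ hX₂) (hmin₂ _ hX₁)
    have h0 : ∫ a in Icc a₀ a₁,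
        ((entropic P a X₁ + entropic P a X₂) / 2 - entropic P a (midpt X₁ X₂)) ∂m = 0 := by
      rw [hdef _ hX₁ _ hX₂]
      linarith [hconv _ hX₁ _ hX₂, hmin₁ _ (hmid _ hX₁ _ hX₂)]
    rw [integral_eq_zero_iff_of_nonneg_ae (hdnn _ hX₁ _ hX₂) (hdint _ hX₁ _ hX₂),
      EventuallyEq, ae_restrict_iff' measurableSet_Icc] at h0
    have hmae : ∀ᵐ a ∂m, a ∈ Icc a₀ a₁ := (prob_compl_eq_zero_iff measurableSet_Icc).2 hm
    obtain ⟨a, h0a, ha⟩ := (h0.and hmae).exists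
    obtain ⟨c, hc⟩ := exists_const_of_entropic_midpt_eq hX₁.1 hX₂.1 (ha₀.trans_le ha.1)
      (sub_eq_zero.1 (h0a ha)).symm
    have hcash : werm P m a₀ a₁ X₁ = werm P m a₀ a₁ X₂ - c := by
      have e : werm P m a₀ a₁ X₁ = ∫ a in Icc a₀ a₁, (entropic P a X₂ - c) ∂m :=
        setIntegral_congr_fun measurableSet_Icc fun a ha =>
          entropic_add_const hX₂.1 (ha₀.trans_le ha.1) hc
      rw [e, integral_sub (hint _ hX₂) (integrable_const _), setIntegral_const,
        measureReal_def, hm]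
      simp [werm]
    have hc0 : c = 0 := by linarith
    filter_upwards [hc] with ω hω
    rw [hω, hc0, add_zero]
end
end
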